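/- arXiv:2510.00214 — 3 statements merged into one kernel-verified Lean document; each statement's English description precedes it below -/
import Mathlib

section
/- For all s > 0 and x, z in [0,1], the Dirichlet heat kernel G_s(x,z) = 2 * ∑_{n=1}^∞ sin(nπx) sin(nπz) exp(-n²π²s/2) satisfies 0 ≤ G_s(x,z) ≤ 1/√s. -/
/-!
Put `q = exp (-π² s / 2)`.

*Lower bound.* Since `2 sin a sin b = cos (a - b) - cos (a + b)`, the kernel equals
`(Θ (π (x - z)) - Θ (π (x + z))) / 2` with `Θ θ = ∑_{j ∈ ℤ} q^{j²} cos (j θ)`. On `[0,1]` one has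
`cos (π (x - z)) - cos (π (x + z)) = 2 sin (π x) sin (π z) ≥ 0`, so it suffices that `Θ θ` is a
monotone function of `cos θ` (`theta_mono`). This is visible from the Jacobi triple product, whose
factors `1 + 2 q^{2k+1} cos θ + q^{4k+2}` are nonnegative and increasing in `cos θ`. Only its finite
form is needed (`hasSum_f`): the product of the first `n` factors is, up to a positive constant,
`∑_j [2n choose n+j]_{q²} q^{j²} cos (j θ)`. After normalisation the Gaussian binomial coefficients
are at most `1` by log-concavity (`w_mul_le`) and tend to `1` (`tendsto_w_ratio`), so dominated
convergence gives `Θ` as the limit (`tendsto_theta`).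

*Upper bound.* Bounding the sines by `1` and comparing the sum with an integral,
`G s x z ≤ 2 ∫_0^∞ exp (-π² s u² / 2) du = √(2 / (π s)) ≤ 1 / √s` (`tsum_gaussian_le`).
-/

open Real MeasureTheory Set Filter

noncomputable section

/-- The Dirichlet heat kernel on [0,1]:
`G t x y = 2 ∑_{n≥1} sin(nπx) sin(nπy) exp(-n²π²t/2)`. -/
def G (t x y : ℝ) : ℝ :=
  2 * ∑' n : ℕ, Real.sin (((n : ℝ) + 1) * Real.pi * x) *
      Real.sin (((n : ℝ) + 1) * Real.pi * y) *
      Real.exp (-(((n : ℝ) + 1) ^ 2) * Real.pi ^ 2 * t / 2)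

namespace DirichletKernel

/-- `w q m = 1 / ∏_{i=1}^m (1 - q^{2i})`, extended by `0` to negative `m`. With this convention the
recursion `w (m - 1) = (1 - q^{2m}) w m` holds on all of `ℤ`. -/
def w (q : ℝ) (m : ℤ) : ℝ :=
  if m < 0 then 0 else (∏ i ∈ Finset.range m.toNat, (1 - q ^ (2 * (i + 1))))⁻¹

lemma one_sub_pos {q : ℝ} (h0 : 0 < q) (h1 : q < 1) {k : ℕ} (hk : k ≠ 0) : 0 < 1 - q ^ k :=
  sub_pos.2 (pow_lt_one₀ h0.le h1 hk)

lemma w_pos {q : ℝ} (h0 : 0 < q) (h1 : q < 1) {m : ℤ} (hm : 0 ≤ m) : 0 < w q m := by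
  rw [w, if_neg (not_lt.2 hm)]
  exact inv_pos.2 (Finset.prod_pos fun i _ => one_sub_pos h0 h1 (by omega))

lemma w_nonneg {q : ℝ} (h0 : 0 < q) (h1 : q < 1) (m : ℤ) : 0 ≤ w q m := by
  rcases lt_or_ge m 0 with h | h
  · rw [w, if_pos h]
  · exact (w_pos h0 h1 h).le

lemma w_pred {q : ℝ} (h0 : 0 < q) (h1 : q < 1) (m : ℤ) :
    w q (m - 1) = (1 - q ^ (2 * m)) * w q m := by
  rcases lt_trichotomy m 0 with h | h | h
  · simp [w, h, show m - 1 < 0 by omega]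
  · subst h; simp [w]
  · obtain ⟨k, rfl⟩ : ∃ k : ℕ, m = k + 1 := ⟨(m - 1).toNat, by omega⟩
    have e : q ^ (2 * ((k : ℤ) + 1)) = q ^ (2 * (k + 1)) := by
      rw [← zpow_natCast]; push_cast; rfl
    have hne : (1 - q ^ (2 * (k + 1))) ≠ 0 := (one_sub_pos h0 h1 (by omega)).ne'
    rw [e, w, w, if_neg (by omega), if_neg (by omega), show ((k : ℤ) + 1 - 1).toNat = k by omega,
      show ((k : ℤ) + 1).toNat = k + 1 by omega, Finset.prod_range_succ, mul_inv]
    field_simp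

/-- Log-concavity of `w`, the source of the uniform bound on the normalised coefficients. -/
lemma w_mul_le_nat {q : ℝ} (h0 : 0 < q) (h1 : q < 1) (n : ℤ) (j : ℕ) :
    w q (n - j) * w q (n + j) ≤ w q n ^ 2 := by
  induction j with
  | zero => simp [sq]
  | succ j ih =>
    refine le_trans ?_ ih
    have e1 := w_pred h0 h1 (n - j)
    have e2 := w_pred h0 h1 (n + j + 1)
    rw [show n + (j : ℤ) + 1 - 1 = n + j by ring] at e2
    push_cast
    rw [show n - ((j : ℤ) + 1) = n - j - 1 by ring, ← add_assoc, e1, e2]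
    have hle : q ^ (2 * (n + (j : ℤ) + 1)) ≤ q ^ (2 * (n - (j : ℤ))) :=
      zpow_le_zpow_right_of_le_one₀ h0 h1.le (by omega)
    have := mul_nonneg (w_nonneg h0 h1 (n - j)) (w_nonneg h0 h1 (n + j + 1))
    nlinarith

lemma w_mul_le {q : ℝ} (h0 : 0 < q) (h1 : q < 1) (n j : ℤ) :
    w q (n - j) * w q (n + j) ≤ w q n ^ 2 := by
  obtain ⟨k, rfl | rfl⟩ := j.eq_nat_or_neg
  · exact w_mul_le_nat h0 h1 n k
  · have := w_mul_le_nat h0 h1 n k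
    rw [sub_neg_eq_add, ← sub_eq_add_neg, mul_comm]
    exact this

lemma tendsto_one_sub {q : ℝ} (h0 : 0 < q) (h1 : q < 1) (k : ℤ) :
    Tendsto (fun n : ℕ => 1 - q ^ (2 * ((n : ℤ) + k))) atTop (nhds 1) := by
  have h : Tendsto (fun n : ℕ => 1 - q ^ (2 * k) * (q ^ 2) ^ n) atTop
      (nhds (1 - q ^ (2 * k) * 0)) :=
    ((tendsto_pow_atTop_nhds_zero_of_lt_one (by positivity)
      (pow_lt_one₀ h0.le h1 two_ne_zero)).const_mul _).const_sub _
  simp only [mul_zero, sub_zero] at h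
  refine h.congr fun n => ?_
  rw [mul_add, zpow_add₀ h0.ne', zpow_mul q 2 (n : ℤ), zpow_natCast, mul_comm]
  norm_cast

lemma tendsto_w_ratio {q : ℝ} (h0 : 0 < q) (h1 : q < 1) (k : ℤ) :
    Tendsto (fun n : ℕ => w q (n + k) / w q n) atTop (nhds 1) := by
  induction k using Int.induction_on with
  | zero =>
    refine tendsto_const_nhds.congr fun n => ?_
    rw [add_zero, div_self (w_pos h0 h1 (by positivity)).ne']
  | succ k ih =>
    have h := ih.div (tendsto_one_sub h0 h1 (k + 1)) one_ne_zero
    rw [div_one] at h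
    refine h.congr fun n => ?_
    have e := w_pred h0 h1 ((n : ℤ) + (k + 1))
    rw [show (n : ℤ) + (k + 1) - 1 = n + k by ring] at e
    have hp : 0 < 1 - q ^ (2 * ((n : ℤ) + (k + 1))) := by
      have := one_sub_pos h0 h1 (k := 2 * (n + (k + 1))) (by omega)
      rw [← zpow_natCast] at this
      push_cast at this
      exact this
    simp only [Pi.div_apply]
    rw [e]
    field_simp
  | pred k ih =>
    have h := (tendsto_one_sub h0 h1 (-k)).mul ih
    rw [one_mul] at h
    refine h.congr fun n => ?_
    have e := w_pred h0 h1 ((n : ℤ) + -k)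
    rw [show (n : ℤ) + (-k - 1) = n + -k - 1 by ring, e, mul_div_assoc]

/-- The coefficients of the finite triple product: up to a factor independent of `j`, `f q n j` is
`q^{j²}` times the Gaussian binomial coefficient `(2n choose n + j)` in base `q²`. -/
def f (q : ℝ) (n j : ℤ) : ℝ := q ^ (j ^ 2) * (w q (n - j) * w q (n + j))

/-- The `k`-th factor of the finite triple product, as a function of `c = cos θ`. The denominator
absorbs the factor `∏_{i=1}^{2n} (1 - q^{2i})` of the Gaussian binomial coefficients that `f`
leaves out. -/
def fac (q c : ℝ) (k : ℕ) : ℝ :=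
  (1 + q ^ (4 * k + 2) + q ^ (2 * k + 1) * (2 * c)) / ((1 - q ^ (4 * k + 2)) * (1 - q ^ (4 * k + 4)))

/-- The Pascal-type recursion that corresponds to multiplying the finite triple product by its next
factor. It holds for all integers `j`, including those where the coefficients vanish. -/
lemma f_succ {q : ℝ} (h0 : 0 < q) (h1 : q < 1) (n : ℕ) (j : ℤ) :
    f q (n + 1) j * ((1 - q ^ (4 * n + 2)) * (1 - q ^ (4 * n + 4))) =
      (1 + q ^ (4 * n + 2)) * f q n j + q ^ (2 * n + 1) * (f q n (j - 1) + f q n (j + 1)) := by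
  have hq := h0.ne'
  have a1 := w_pred h0 h1 ((n : ℤ) + 1 - j)
  have a2 := w_pred h0 h1 ((n : ℤ) - j)
  have b1 := w_pred h0 h1 ((n : ℤ) + 1 + j)
  have b2 := w_pred h0 h1 ((n : ℤ) + j)
  rw [show (n : ℤ) + 1 - j - 1 = n - j by ring] at a1
  rw [show (n : ℤ) + 1 + j - 1 = n + j by ring] at b1
  simp only [f]
  rw [show (n : ℤ) - (j - 1) = n + 1 - j by ring, show (n : ℤ) + (j - 1) = n + j - 1 by ring,
    show (n : ℤ) - (j + 1) = n - j - 1 by ring, show (n : ℤ) + (j + 1) = n + 1 + j by ring,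
    a2, b2, a1, b1]
  generalize w q ((n : ℤ) + 1 - j) = u
  generalize w q ((n : ℤ) + 1 + j) = v
  have c1 : q ^ (4 * n + 2) = (q ^ n) ^ 4 * q ^ 2 := by ring
  have c2 : q ^ (4 * n + 4) = (q ^ n) ^ 4 * q ^ 4 := by ring
  have c3 : q ^ (2 * n + 1) = (q ^ n) ^ 2 * q := by ring
  have d1 : q ^ (2 * ((n : ℤ) + 1 - j)) = (q ^ n) ^ 2 * q ^ 2 / (q ^ j) ^ 2 := by
    rw [mul_comm, zpow_mul, zpow_sub₀ hq, zpow_add₀ hq]; norm_cast; rw [div_pow, mul_pow, pow_one]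
  have d2 : q ^ (2 * ((n : ℤ) + 1 + j)) = (q ^ n) ^ 2 * q ^ 2 * (q ^ j) ^ 2 := by
    rw [mul_comm, zpow_mul, zpow_add₀ hq, zpow_add₀ hq]; norm_cast; rw [mul_pow, mul_pow, pow_one]
  have d3 : q ^ (2 * ((n : ℤ) - j)) = (q ^ n) ^ 2 / (q ^ j) ^ 2 := by
    rw [mul_comm, zpow_mul, zpow_sub₀ hq]; norm_cast; rw [div_pow]
  have d4 : q ^ (2 * ((n : ℤ) + j)) = (q ^ n) ^ 2 * (q ^ j) ^ 2 := by
    rw [mul_comm, zpow_mul, zpow_add₀ hq]; norm_cast; rw [mul_pow]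
  have e1 : q ^ ((j - 1) ^ 2) = q ^ (j ^ 2) * q / (q ^ j) ^ 2 := by
    rw [show (j - 1) ^ 2 = j ^ 2 + 1 - j * 2 by ring, zpow_sub₀ hq, zpow_add₀ hq, zpow_mul]
    norm_cast; rw [pow_one]
  have e2 : q ^ ((j + 1) ^ 2) = q ^ (j ^ 2) * q * (q ^ j) ^ 2 := by
    rw [show (j + 1) ^ 2 = j ^ 2 + 1 + j * 2 by ring, zpow_add₀ hq, zpow_add₀ hq, zpow_mul]
    norm_cast; rw [pow_one]
  rw [c1, c2, c3, d1, d2, d3, d4, e1, e2]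
  have hy : q ^ j ≠ 0 := zpow_ne_zero _ hq
  generalize q ^ j = y at *
  generalize q ^ (j ^ 2) = g
  generalize q ^ n = x
  field_simp
  ring

/-- The finite Jacobi triple product, at a point `Z` with `Z + Z⁻¹ = 2c`. -/
lemma hasSum_f {q : ℝ} (h0 : 0 < q) (h1 : q < 1) {Z : ℂ} {c : ℝ} (hZ : Z ≠ 0)
    (hc : Z + Z⁻¹ = 2 * c) (n : ℕ) :
    HasSum (fun j : ℤ => (f q n j : ℂ) * Z ^ j) ((∏ k ∈ Finset.range n, fac q c k : ℝ) : ℂ) := by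
  induction n with
  | zero =>
    have h : ∀ j : ℤ, j ≠ 0 → (f q (0 : ℕ) j : ℂ) * Z ^ j = 0 := by
      intro j hj
      have : f q (0 : ℕ) j = 0 := by
        rcases lt_or_gt_of_ne hj with h | h
        · simp [f, w, h]
        · simp [f, w, h]
      rw [this]; simp
    convert! hasSum_single 0 h using 1
    simp [f, w]
  | succ n ih =>
    have s1 : HasSum (fun j : ℤ => (f q n (j - 1) : ℂ) * Z ^ j)
        (Z * ((∏ k ∈ Finset.range n, fac q c k : ℝ) : ℂ)) := by
      rw [← (Equiv.addRight (1 : ℤ)).hasSum_iff]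
      convert! ih.mul_left Z using 2 with j
      simp [zpow_add₀ hZ]; ring
    have s2 : HasSum (fun j : ℤ => (f q n (j + 1) : ℂ) * Z ^ j)
        (Z⁻¹ * ((∏ k ∈ Finset.range n, fac q c k : ℝ) : ℂ)) := by
      rw [← (Equiv.subRight (1 : ℤ)).hasSum_iff]
      convert! ih.mul_left Z⁻¹ using 2 with j
      simp [zpow_sub₀ hZ]; field_simp
    have p1 := one_sub_pos h0 h1 (k := 4 * n + 2) (by omega)
    have p2 := one_sub_pos h0 h1 (k := 4 * n + 4) (by omega)
    have s := ((ih.mul_left ((1 + q ^ (4 * n + 2) : ℝ) : ℂ)).add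
      ((s1.add s2).mul_left ((q ^ (2 * n + 1) : ℝ) : ℂ))).mul_left
      ((((1 - q ^ (4 * n + 2)) * (1 - q ^ (4 * n + 4)))⁻¹ : ℝ) : ℂ)
    convert! s using 1
    · funext j
      have h := f_succ h0 h1 n j
      rw [← eq_div_iff (mul_pos p1 p2).ne'] at h
      push_cast at h ⊢
      rw [h]
      push_cast
      ring
    · rw [Finset.prod_range_succ, ← add_mul, hc]
      simp only [fac]
      push_cast
      ring

lemma hasSum_f_cos {q : ℝ} (h0 : 0 < q) (h1 : q < 1) (θ : ℝ) (n : ℕ) :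
    HasSum (fun j : ℤ => f q n j * cos (j * θ)) (∏ k ∈ Finset.range n, fac q (cos θ) k) := by
  have hc : Complex.exp (θ * Complex.I) + (Complex.exp (θ * Complex.I))⁻¹ =
      2 * ((cos θ : ℝ) : ℂ) := by
    rw [← Complex.exp_neg, Complex.ofReal_cos, Complex.two_cos, neg_mul]
  have h := Complex.hasSum_re (hasSum_f h0 h1 (Complex.exp_ne_zero _) hc n)
  rw [Complex.ofReal_re] at h
  convert! h using 2 with j
  rw [← Complex.exp_int_mul, Complex.re_ofReal_mul, ← mul_assoc]
  congr 1
  have := Complex.exp_ofReal_mul_I_re (j * θ)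
  push_cast at this
  exact this.symm

lemma fac_nonneg {q : ℝ} (h0 : 0 < q) (h1 : q < 1) (θ : ℝ) (k : ℕ) : 0 ≤ fac q (cos θ) k := by
  have p1 := one_sub_pos h0 h1 (k := 4 * k + 2) (by omega)
  have p2 := one_sub_pos h0 h1 (k := 4 * k + 4) (by omega)
  refine div_nonneg ?_ (mul_pos p1 p2).le
  have e : q ^ (4 * k + 2) = (q ^ (2 * k + 1)) ^ 2 := by ring
  have := mul_le_mul_of_nonneg_left (neg_one_le_cos θ) (pow_pos h0 (2 * k + 1)).le
  rw [e]
  nlinarith [sq_nonneg (1 - q ^ (2 * k + 1))]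

lemma fac_mono {q : ℝ} (h0 : 0 < q) (h1 : q < 1) {c d : ℝ} (h : c ≤ d) (k : ℕ) :
    fac q c k ≤ fac q d k := by
  have p1 := one_sub_pos h0 h1 (k := 4 * k + 2) (by omega)
  have p2 := one_sub_pos h0 h1 (k := 4 * k + 4) (by omega)
  unfold fac
  gcongr

lemma summable_sq {q : ℝ} (h0 : 0 < q) (h1 : q < 1) : Summable fun j : ℤ => q ^ (j ^ 2) := by
  have h : Summable fun n : ℕ => q ^ ((n : ℤ) ^ 2) := by
    refine Summable.of_nonneg_of_le (fun n => by positivity) (fun n => ?_)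
      (summable_geometric_of_lt_one h0.le h1)
    rw [← zpow_natCast]
    exact zpow_le_zpow_right_of_le_one₀ h0 h1.le (by nlinarith [Int.le_self_sq (n : ℤ)])
  exact Summable.of_nat_of_neg h (by simpa using h)

/-- After division by `w q n ^ 2` the coefficients `f q n j` lie between `0` and `q^{j²}` and tend
to `q^{j²}`, so the finite triple product converges to the theta series. -/
lemma tendsto_theta {q : ℝ} (h0 : 0 < q) (h1 : q < 1) (θ : ℝ) :
    Tendsto (fun n : ℕ => (∏ k ∈ Finset.range n, fac q (cos θ) k) / w q n ^ 2) atTop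
      (nhds (∑' j : ℤ, q ^ (j ^ 2) * cos (j * θ))) := by
  have key : Tendsto (fun n : ℕ => ∑' j : ℤ, f q n j * cos (j * θ) / w q n ^ 2) atTop
      (nhds (∑' j : ℤ, q ^ (j ^ 2) * cos (j * θ))) := by
    refine tendsto_tsum_of_dominated_convergence (summable_sq h0 h1) (fun j => ?_)
      (Eventually.of_forall fun n j => ?_)
    · have h := ((tendsto_w_ratio h0 h1 (-j)).mul (tendsto_w_ratio h0 h1 j)).const_mul
        (q ^ (j ^ 2) * cos (j * θ))
      rw [mul_one, mul_one] at h
      refine h.congr fun n => ?_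
      simp only [f, ← sub_eq_add_neg]
      ring
    · have hw : 0 < w q n ^ 2 := pow_pos (w_pos h0 h1 (by positivity)) 2
      have hq : 0 < q ^ (j ^ 2) := zpow_pos h0 _
      have hf : 0 ≤ f q n j :=
        mul_nonneg hq.le (mul_nonneg (w_nonneg h0 h1 _) (w_nonneg h0 h1 _))
      rw [norm_div, norm_mul, Real.norm_of_nonneg hf, Real.norm_of_nonneg hw.le,
        div_le_iff₀ hw]
      calc f q n j * ‖cos (j * θ)‖ ≤ f q n j * 1 :=
            mul_le_mul_of_nonneg_left (abs_cos_le_one _) hf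
        _ ≤ _ := by
            rw [mul_one]
            exact mul_le_mul_of_nonneg_left (w_mul_le h0 h1 n j) hq.le
  refine key.congr fun n => ?_
  rw [tsum_div_const, (hasSum_f_cos h0 h1 θ n).tsum_eq]

/-- The theta series is a monotone function of `cos θ`, because every finite triple product is. -/
lemma theta_mono {q : ℝ} (h0 : 0 < q) (h1 : q < 1) {α β : ℝ} (h : cos α ≤ cos β) :
    ∑' j : ℤ, q ^ (j ^ 2) * cos (j * α) ≤ ∑' j : ℤ, q ^ (j ^ 2) * cos (j * β) := by
  refine le_of_tendsto_of_tendsto' (tendsto_theta h0 h1 α) (tendsto_theta h0 h1 β) fun n => ?_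
  exact div_le_div_of_nonneg_right (Finset.prod_le_prod (fun k _ => fac_nonneg h0 h1 α k)
    fun k _ => fac_mono h0 h1 h k) (by positivity)

lemma summable_theta {q : ℝ} (h0 : 0 < q) (h1 : q < 1) (θ : ℝ) :
    Summable fun j : ℤ => q ^ (j ^ 2) * cos (j * θ) := by
  refine Summable.of_norm_bounded (summable_sq h0 h1) fun j => ?_
  have hq : 0 < q ^ (j ^ 2) := zpow_pos h0 _
  rw [norm_mul, Real.norm_of_nonneg hq.le]
  exact mul_le_of_le_one_right hq.le (abs_cos_le_one _)

/-- The sine series is, up to a positive factor, the difference of the theta series at `x - z` and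
`x + z`. -/
lemma tsum_sin_nonneg {q : ℝ} (h0 : 0 < q) (h1 : q < 1) {x z : ℝ}
    (hx : 0 ≤ sin x) (hz : 0 ≤ sin z) :
    0 ≤ ∑' n : ℕ, sin ((n + 1) * x) * sin ((n + 1) * z) * q ^ ((n + 1) ^ 2) := by
  have hcos : cos (x + z) ≤ cos (x - z) := by
    rw [cos_add, cos_sub]
    nlinarith [mul_nonneg hx hz]
  have hm := theta_mono h0 h1 hcos
  rw [← sub_nonneg,
    ← (summable_theta h0 h1 (x - z)).tsum_sub (summable_theta h0 h1 (x + z))] at hm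
  have hs := (summable_theta h0 h1 (x - z)).sub (summable_theta h0 h1 (x + z))
  have hF : (fun j : ℤ => q ^ (j ^ 2) * cos (j * (x - z)) - q ^ (j ^ 2) * cos (j * (x + z)))
      = fun j : ℤ => 2 * (sin (j * x) * sin (j * z) * q ^ (j ^ 2)) := by
    funext j
    rw [mul_sub, mul_add, cos_sub, cos_add]
    ring
  rw [hF] at hs hm
  have i1 : Summable fun n : ℕ =>
      2 * (sin (((n : ℤ) : ℝ) * x) * sin (((n : ℤ) : ℝ) * z) * q ^ ((n : ℤ) ^ 2)) :=
    hs.comp_injective (i := fun n : ℕ => (n : ℤ)) Nat.cast_injective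
  have i2 := (summable_nat_add_iff 1).2 i1
  have e : ∀ n : ℕ, q ^ (((n + 1 : ℕ) : ℤ) ^ 2) = q ^ ((n + 1) ^ 2) := fun n => by
    rw [← zpow_natCast]; push_cast; rfl
  have i3 : (fun n : ℕ => 2 * (sin (((-((n : ℤ) + 1) : ℤ) : ℝ) * x) *
      sin (((-((n : ℤ) + 1) : ℤ) : ℝ) * z) * q ^ ((-((n : ℤ) + 1)) ^ 2))) =
      fun n : ℕ => 2 * (sin ((((n + 1 : ℕ) : ℤ) : ℝ) * x) *
        sin ((((n + 1 : ℕ) : ℤ) : ℝ) * z) * q ^ (((n + 1 : ℕ) : ℤ) ^ 2)) := by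
    funext n
    rw [neg_sq]
    push_cast
    rw [neg_mul, neg_mul, sin_neg, sin_neg]
    ring
  rw [tsum_of_nat_of_neg_add_one i1 (by rw [i3]; exact i2), i3, i1.tsum_eq_zero_add] at hm
  simp only [e] at hm
  rw [tsum_mul_left] at hm
  push_cast at hm
  simp only [zero_mul, sin_zero, mul_zero, zero_add] at hm
  linarith

/-- Comparison of the sum over `n ≥ 1` with the Gaussian integral over `(0, ∞)`. -/
lemma tsum_gaussian_le {b : ℝ} (hb : 0 < b) :
    Summable (fun n : ℕ => exp (-b * ((n : ℝ) + 1) ^ 2)) ∧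
      ∑' n : ℕ, exp (-b * ((n : ℝ) + 1) ^ 2) ≤ √(π / b) / 2 := by
  have anti : AntitoneOn (fun u : ℝ => exp (-b * u ^ 2)) (Ici 0) := by
    intro u hu v _ huv
    have hu' : (0 : ℝ) ≤ u := hu
    refine exp_le_exp.2 ?_
    have : u ^ 2 ≤ v ^ 2 := by gcongr
    nlinarith
  have hi : IntegrableOn (fun u : ℝ => exp (-b * u ^ 2)) (Ioi 0) :=
    (integrable_exp_neg_mul_sq hb).integrableOn
  constructor
  · have h := (summable_nat_add_iff 1).2
      (anti.summable_of_integrableOn_Ioi_zero hi fun _ _ => (exp_pos _).le)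
    simpa using h
  · rw [← integral_gaussian_Ioi]
    simpa using anti.tsum_add_one_le_integral hi fun _ _ => (exp_pos _).le

end DirichletKernel

open DirichletKernel in
theorem dirichlet_kernel_pointwise_bounds
    (s x z : ℝ) (hs : 0 < s) (hx : x ∈ Set.Icc (0 : ℝ) 1) (hz : z ∈ Set.Icc (0 : ℝ) 1) :
    0 ≤ G s x z ∧ G s x z ≤ 1 / Real.sqrt s := by
  have hsin : ∀ {y : ℝ}, y ∈ Set.Icc (0 : ℝ) 1 → 0 ≤ sin (π * y) := fun {y} hy =>
    sin_nonneg_of_nonneg_of_le_pi (mul_nonneg pi_pos.le hy.1)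
      (mul_le_of_le_one_right pi_pos.le hy.2)
  constructor
  · have hq1 : exp (-(π ^ 2 * s / 2)) < 1 := Real.exp_lt_one_iff.2 (neg_lt_zero.2 (by positivity))
    have h := tsum_sin_nonneg (exp_pos _) hq1 (hsin hx) (hsin hz)
    refine mul_nonneg zero_le_two (h.trans_eq (tsum_congr fun n => ?_))
    rw [← exp_nat_mul, mul_assoc _ π x, mul_assoc _ π z]
    push_cast
    congr 2
    ring
  · have hb : 0 < π ^ 2 * s / 2 := by positivity
    obtain ⟨hsum, hle⟩ := tsum_gaussian_le hb
    have hterm : ∀ n : ℕ, ‖sin (((n : ℝ) + 1) * π * x) * sin (((n : ℝ) + 1) * π * z) *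
        exp (-(((n : ℝ) + 1) ^ 2) * π ^ 2 * s / 2)‖ ≤
        exp (-(π ^ 2 * s / 2) * ((n : ℝ) + 1) ^ 2) := by
      intro n
      rw [norm_mul, norm_mul, Real.norm_of_nonneg (exp_pos _).le,
        show -(((n : ℝ) + 1) ^ 2) * π ^ 2 * s / 2 = -(π ^ 2 * s / 2) * ((n : ℝ) + 1) ^ 2 by ring]
      exact mul_le_of_le_one_left (exp_pos _).le
        (mul_le_one₀ (abs_sin_le_one _) (norm_nonneg _) (abs_sin_le_one _))
    have hG := (Summable.of_norm_bounded hsum hterm).tsum_le_tsum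
      (fun n => (le_abs_self _).trans (hterm n)) hsum
    have hfin : √(π / (π ^ 2 * s / 2)) ≤ 1 / √s := by
      rw [← sqrt_one, ← sqrt_div zero_le_one]
      refine sqrt_le_sqrt ?_
      rw [show π / (π ^ 2 * s / 2) = (2 / π) / s by field_simp]
      gcongr
      rw [div_le_one pi_pos]
      linarith [pi_gt_three]
    unfold G
    linarith

end
end

section
/- For the Dirichlet heat kernel G on [0,1], sup_{x∈[0,1]} ∫₀¹ |G_t(x,y) - G_s(x,y)| dy ≤ log(t/s) for all 0 < s < t. -/
/-! By the product formula for sines, `G t x y = ½ (K t (x - y) - K t (x + y))`, where `K` is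
the heat kernel `K t z = 1 + 2 ∑_{n ≥ 1} cos (n π z) exp (-n² π² t / 2)` of the circle of length `2`
(normalised to have mass `2`, see `periodicKernel`), while the corresponding half sum
`½ (K t (x - y) + K t (x + y))` is the Neumann kernel, of mass one on `[0, 1]`.

By Poisson summation, available in Mathlib as the functional equation of the Hurwitz kernels,
`K t z` is `√(2 / (π t))` times a sum of terms `exp (-(z + 2 n)² / (2 t))`, each of which is monotone
in `t`. Hence `K t ≥ c * K s` with `c = √(s / t)` (`sqrt_mul_periodicKernel_mono`). The negative part
of `K t - K s` is therefore at most `(1 - c) K s`, so that `|K t - K s| ≤ K t + (1 - 2 c) K s`.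
Summing over the two images and integrating against the mass-one property gives
`∫ |G t x y - G s x y| dy ≤ 2 (1 - c) ≤ 2 log (1 / c) = log (t / s)`. This avoids differentiating
in time. -/

open Real MeasureTheory Set Filter

noncomputable section

/-- The heat kernel of the circle `ℝ / 2ℤ` for the generator `½ ∂²`, normalised to have mass `2`
over a period; it equals `1 + 2 ∑_{n ≥ 1} cos (n π z) exp (-n² π² t / 2)`. It is encoded through
the cosine Hurwitz kernel, whose spatial period is `1`. -/
def periodicKernel (t z : ℝ) : ℝ :=
  HurwitzZeta.cosKernel ((z / 2 : ℝ) : UnitAddCircle) (π * t / 2)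

lemma hasSum_periodicKernel {t : ℝ} (ht : 0 < t) (z : ℝ) :
    HasSum (fun n : ℕ => 2 * Real.cos (((n : ℝ) + 1) * π * z) *
      Real.exp (-(((n : ℝ) + 1) ^ 2) * π ^ 2 * t / 2)) (periodicKernel t z - 1) := by
  have h := HurwitzZeta.hasSum_nat_cosKernel₀ (z / 2) (t := π * t / 2) (by positivity)
  unfold periodicKernel
  convert h using 4 <;> ring_nf

lemma summable_exp_modes {t : ℝ} (ht : 0 < t) :
    Summable (fun n : ℕ => 2 * Real.exp (-(((n : ℝ) + 1) ^ 2) * π ^ 2 * t / 2)) := by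
  simpa using (hasSum_periodicKernel ht 0).summable

lemma continuous_periodicKernel {t : ℝ} (ht : 0 < t) : Continuous (periodicKernel t) := by
  have h : periodicKernel t = fun z => 1 + ∑' n : ℕ, 2 * Real.cos (((n : ℝ) + 1) * π * z) *
      Real.exp (-(((n : ℝ) + 1) ^ 2) * π ^ 2 * t / 2) := by
    ext z
    rw [(hasSum_periodicKernel ht z).tsum_eq]
    ring
  rw [h]
  refine continuous_const.add (continuous_tsum (fun n => by fun_prop) (summable_exp_modes ht) ?_)
  intro n z
  rw [norm_mul, norm_mul, Real.norm_of_nonneg (Real.exp_pos _).le, Real.norm_two]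
  gcongr
  have := Real.abs_cos_le_one (((n : ℝ) + 1) * π * z)
  rw [Real.norm_eq_abs]
  linarith

/-- Poisson summation: the kernel as a sum of Gaussians centred at the image points. -/
lemma hasSum_sqrt_mul_periodicKernel {t : ℝ} (ht : 0 < t) (z : ℝ) :
    HasSum (fun n : ℤ => Real.exp (-(2 * n + z) ^ 2 / (2 * t)))
      (√(π * t / 2) * periodicKernel t z) := by
  have hu : 0 < π * t / 2 := by positivity
  have h := HurwitzZeta.hasSum_int_evenKernel (z / 2) (t := 1 / (π * t / 2)) (by positivity)
  rw [HurwitzZeta.evenKernel_functional_equation, one_div_one_div, ← Real.sqrt_eq_rpow,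
    one_div (π * t / 2), Real.sqrt_inv, one_div, inv_inv] at h
  unfold periodicKernel
  convert h using 3 with n
  field_simp

lemma periodicKernel_nonneg {t : ℝ} (ht : 0 < t) (z : ℝ) : 0 ≤ periodicKernel t z := by
  have h := (hasSum_sqrt_mul_periodicKernel ht z).nonneg fun n => (Real.exp_pos _).le
  exact nonneg_of_mul_nonneg_right h (Real.sqrt_pos.2 (by positivity))

/-- `t ↦ √t * periodicKernel t z` is increasing, since every term of its Gaussian series is. -/
lemma sqrt_mul_periodicKernel_mono {s t : ℝ} (hs : 0 < s) (hst : s < t) (z : ℝ) :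
    √(s / t) * periodicKernel s z ≤ periodicKernel t z := by
  have ht : 0 < t := hs.trans hst
  have h : √(π * s / 2) * periodicKernel s z ≤ √(π * t / 2) * periodicKernel t z := by
    refine hasSum_le (fun n : ℤ => ?_) (hasSum_sqrt_mul_periodicKernel hs z)
      (hasSum_sqrt_mul_periodicKernel ht z)
    rw [Real.exp_le_exp, neg_div, neg_div, neg_le_neg_iff]
    gcongr
  have hc : √(π * s / 2) = √(π * t / 2) * √(s / t) := by
    rw [← Real.sqrt_mul (by positivity)]
    congr 1
    field_simp
  rw [hc, mul_assoc] at h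
  exact le_of_mul_le_mul_left h (Real.sqrt_pos.2 (by positivity))

/-- This is `|a| = a + 2 a⁻` for `a = K t z - K s z`, with the bound `a⁻ ≤ (1 - √(s / t)) K s z`. -/
lemma abs_periodicKernel_sub_le {s t : ℝ} (hs : 0 < s) (hst : s < t) (z : ℝ) :
    |periodicKernel t z - periodicKernel s z| ≤
      periodicKernel t z + (1 - 2 * √(s / t)) * periodicKernel s z := by
  have h1 := sqrt_mul_periodicKernel_mono hs hst z
  have h2 := periodicKernel_nonneg hs z
  have h3 : √(s / t) ≤ 1 := by
    rw [Real.sqrt_le_one, div_le_one (hs.trans hst)]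
    exact hst.le
  rw [abs_le]
  constructor <;> nlinarith

/-- The Dirichlet kernel on `[0, 1]` as the odd reflection of the kernel of the circle `ℝ / 2ℤ`. -/
lemma G_eq_periodicKernel {t : ℝ} (ht : 0 < t) (x y : ℝ) :
    G t x y = (periodicKernel t (x - y) - periodicKernel t (x + y)) / 2 := by
  have h := ((hasSum_periodicKernel ht (x - y)).sub
    (hasSum_periodicKernel ht (x + y))).div_const 4
  have h' : HasSum (fun n : ℕ => Real.sin (((n : ℝ) + 1) * Real.pi * x) *
      Real.sin (((n : ℝ) + 1) * Real.pi * y) *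
      Real.exp (-(((n : ℝ) + 1) ^ 2) * Real.pi ^ 2 * t / 2))
      ((periodicKernel t (x - y) - 1 - (periodicKernel t (x + y) - 1)) / 4) := by
    convert! h using 2 with n
    rw [mul_sub, mul_add, Real.cos_sub, Real.cos_add]
    ring
  rw [G, h'.tsum_eq]
  ring

/-- The nonconstant modes of the Neumann kernel integrate to zero, so its mass is one. -/
lemma integral_neumann {t : ℝ} (ht : 0 < t) (x : ℝ) :
    ∫ y in (0 : ℝ)..1, (periodicKernel t (x - y) + periodicKernel t (x + y)) / 2 = 1 := by
  let f : ℕ → C(ℝ, ℝ) := fun n =>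
    ⟨fun y => 2 * Real.cos (((n : ℝ) + 1) * π * x) * Real.cos (((n : ℝ) + 1) * π * y) *
      Real.exp (-(((n : ℝ) + 1) ^ 2) * π ^ 2 * t / 2), by fun_prop⟩
  have hf : ∀ y, HasSum (fun n => f n y)
      ((periodicKernel t (x - y) + periodicKernel t (x + y)) / 2 - 1) := by
    intro y
    have h := ((hasSum_periodicKernel ht (x - y)).add
      (hasSum_periodicKernel ht (x + y))).div_const 2
    have hlim : (periodicKernel t (x - y) - 1 + (periodicKernel t (x + y) - 1)) / 2 =
        (periodicKernel t (x - y) + periodicKernel t (x + y)) / 2 - 1 := by ring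
    rw [hlim] at h
    convert! h using 2 with n
    simp only [f, ContinuousMap.coe_mk]
    rw [mul_sub, mul_add, Real.cos_sub, Real.cos_add]
    ring
  have hint : ∀ n, ∫ y in (0 : ℝ)..1, f n y = 0 := by
    intro n
    have hn : ((n : ℝ) + 1) * π ≠ 0 := by positivity
    have hsin : Real.sin (((n : ℝ) + 1) * π) = 0 := by exact_mod_cast Real.sin_nat_mul_pi (n + 1)
    simp only [f, ContinuousMap.coe_mk]
    rw [intervalIntegral.integral_mul_const, intervalIntegral.integral_const_mul,
      intervalIntegral.integral_comp_mul_left _ hn]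
    simp [hsin]
  have hs : HasSum (fun n => ∫ y in (0 : ℝ)..1, f n y) (∫ y in (0 : ℝ)..1,
      ((periodicKernel t (x - y) + periodicKernel t (x + y)) / 2 - 1)) := by
    refine intervalIntegral.hasSum_integral_of_dominated_convergence
      (fun n _ => 2 * Real.exp (-(((n : ℝ) + 1) ^ 2) * π ^ 2 * t / 2))
      (fun n => (f n).continuous.aestronglyMeasurable) ?_ ?_ ?_ ?_
    · refine fun n => Filter.Eventually.of_forall fun y _ => ?_
      simp only [f, ContinuousMap.coe_mk]
      rw [norm_mul, norm_mul, norm_mul, Real.norm_of_nonneg (Real.exp_pos _).le, Real.norm_two]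
      gcongr
      have h1 := Real.abs_cos_le_one (((n : ℝ) + 1) * π * x)
      have h2 := Real.abs_cos_le_one (((n : ℝ) + 1) * π * y)
      rw [Real.norm_eq_abs, Real.norm_eq_abs]
      nlinarith [abs_nonneg (Real.cos (((n : ℝ) + 1) * π * x)),
        abs_nonneg (Real.cos (((n : ℝ) + 1) * π * y))]
    · exact Filter.Eventually.of_forall fun _ _ => summable_exp_modes ht
    · exact intervalIntegrable_const
    · exact Filter.Eventually.of_forall fun y _ => hf y
  have hK := continuous_periodicKernel ht
  simp only [hint] at hs
  have h0 := hs.unique hasSum_zero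
  rw [intervalIntegral.integral_sub (Continuous.intervalIntegrable (by fun_prop) _ _)
    intervalIntegrable_const] at h0
  simp at h0
  simp
  linarith

theorem dirichlet_kernel_L1_time_increment_log
    (s t x : ℝ) (hs : 0 < s) (hst : s < t) (hx : x ∈ Set.Icc (0 : ℝ) 1) :
    (∫ y in (0 : ℝ)..1, |G t x y - G s x y|) ≤ Real.log (t / s) := by
  have ht : 0 < t := hs.trans hst
  have hKs := continuous_periodicKernel hs
  have hKt := continuous_periodicKernel ht
  have hpt : ∀ y, |G t x y - G s x y| ≤
      (periodicKernel t (x - y) + periodicKernel t (x + y)) / 2 +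
        (1 - 2 * √(s / t)) * ((periodicKernel s (x - y) + periodicKernel s (x + y)) / 2) := by
    intro y
    rw [G_eq_periodicKernel ht, G_eq_periodicKernel hs]
    have h1 := abs_le.1 (abs_periodicKernel_sub_le hs hst (x - y))
    have h2 := abs_le.1 (abs_periodicKernel_sub_le hs hst (x + y))
    rw [abs_le]
    constructor <;> linarith
  have hG : Continuous fun y => |G t x y - G s x y| := by
    simp_rw [G_eq_periodicKernel ht, G_eq_periodicKernel hs]
    fun_prop
  have hbound : (∫ y in (0 : ℝ)..1, |G t x y - G s x y|) ≤ 1 + (1 - 2 * √(s / t)) * 1 := by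
    have h := (intervalIntegral.integral_add (μ := volume) (a := 0) (b := 1)
      (f := fun y => (periodicKernel t (x - y) + periodicKernel t (x + y)) / 2)
      (g := fun y => (1 - 2 * √(s / t)) *
        ((periodicKernel s (x - y) + periodicKernel s (x + y)) / 2))
      (Continuous.intervalIntegrable (by fun_prop) _ _)
      (Continuous.intervalIntegrable (by fun_prop) _ _))
    rw [intervalIntegral.integral_const_mul, integral_neumann ht, integral_neumann hs] at h
    rw [← h]
    exact intervalIntegral.integral_mono_on zero_le_one (hG.intervalIntegrable _ _)
      (Continuous.intervalIntegrable (by fun_prop) _ _) fun y _ => hpt y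
  have hlog : 1 - √(s / t) ≤ Real.log (t / s) / 2 := by
    have h := Real.one_sub_inv_le_log_of_pos (Real.sqrt_pos.2 (div_pos ht hs))
    rwa [← Real.sqrt_inv, inv_div, Real.log_sqrt (by positivity)] at h
  linarith

end
end

section
/- Fix δ ∈ (0,1), η ∈ (δ,1), and θ ∈ (0,1). There exists a constant C such that for all t ∈ (0,1], β > 0, ε ∈ (0,1), and x ∈ [0,1]: t^θ e^{-βt} ∫₀^t s^{-θ} e^{βs} (∫₀¹ |G_{t+ε-s}(x,y) - G_{t-s}(x,y)| dy) ds ≤ C ε^δ / β^{1-η}. -/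
/-!
By the product-to-sum formula for sines, `G t x y = (Θ((x - y)/2) - Θ((x + y)/2)) / 2`, where
`Θ = Θ_τ` with `τ = π t / 2` is the periodic (Poisson-summed) Gaussian, available in Mathlib as
`HurwitzZeta.cosKernel`. The substitution `y ↦ (x ± y)/2` turns the two halves of the spatial
integral of `|G (t + ε) x · - G t x ·|` into integrals over two adjacent half periods, so this
integral is at most `∫₀¹ |Θ_τ' - Θ_τ|`.

For `τ ≤ τ'` and `c = √(τ/τ')`, the functional equation of the theta function writes `Θ_τ` as
`τ^(-1/2)` times a sum of Gaussians `exp (-π (n + a)² / τ)`, each nondecreasing in `τ`; hence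
`Θ_τ' ≥ c Θ_τ ≥ 0`. As both functions have integral one over a period, this one-sided comparison
alone gives `∫₀¹ |Θ_τ' - Θ_τ| ≤ 2 (1 - c) ≤ 2 (1 - τ/τ')` (`integral_abs_theta_sub_le`), which is
the temporal continuity estimate `2 ε / (t + ε) ≤ 2 (ε / t) ^ δ`.

Combining it with `e^{-z} ≤ z^{-(1-η)}` leaves `∫₀ᵗ s^{-θ} (t-s)^{-b} ds` with
`b = 1 - η + δ < 1`. Of `s` and `t - s` one is at least `t / 2`, so the integrand is bounded by the
sum of two integrable powers (`singular_product_le`).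
-/

open Real MeasureTheory Set Filter

noncomputable section

/-! ### The periodic Gaussian -/

/-- The one-periodic Gaussian `∑ₙ τ^(-1/2) exp (-π (n + a)² / τ)`, encoded by its Fourier series
`1 + ∑_{n ≥ 1} 2 cos (2 π n a) exp (-π n² τ)`. It is the heat kernel of the circle `ℝ / ℤ`, with
time normalised so that `τ = 4 π κ t` for diffusivity `κ`. -/
def theta (τ a : ℝ) : ℝ := HurwitzZeta.cosKernel (a : UnitAddCircle) τ

lemma theta_hasSum {τ : ℝ} (hτ : 0 < τ) (a : ℝ) :
    HasSum (fun n : ℕ => 2 * Real.cos (2 * π * a * (n + 1)) * Real.exp (-π * (n + 1) ^ 2 * τ))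
      (theta τ a - 1) :=
  HurwitzZeta.hasSum_nat_cosKernel₀ a hτ

lemma theta_periodic (τ : ℝ) : Function.Periodic (theta τ) 1 := by
  intro a
  simp [theta]

lemma theta_continuous {τ : ℝ} (hτ : 0 < τ) : Continuous (theta τ) := by
  have h : Continuous (fun a : ℝ => jacobiTheta₂ (a : ℂ) (Complex.I * τ)) := by
    rw [continuous_iff_continuousAt]
    intro a
    exact ((differentiableAt_jacobiTheta₂_fst (a : ℂ) (τ := Complex.I * τ)
      (by simpa using hτ)).continuousAt).comp (f := fun u : ℝ => (u : ℂ))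
      Complex.continuous_ofReal.continuousAt
  have h2 : theta τ = fun a : ℝ => (jacobiTheta₂ (a : ℂ) (Complex.I * τ)).re := by
    funext a
    rw [← HurwitzZeta.cosKernel_def, Complex.ofReal_re, theta]
  rw [h2]
  exact Complex.continuous_re.comp h

lemma summable_exp_neg_sq {τ : ℝ} (hτ : 0 < τ) :
    Summable (fun n : ℕ => Real.exp (-π * ((n : ℝ) + 1) ^ 2 * τ)) := by
  have h := (theta_hasSum hτ 0).summable.mul_left (1 / 2)
  refine h.congr fun n => ?_
  simp

/-- The integral of the periodic Gaussian over a period is the zeroth Fourier coefficient. -/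
lemma integral_theta {τ : ℝ} (hτ : 0 < τ) : ∫ a in (0 : ℝ)..1, theta τ a = 1 := by
  have h : HasSum (fun n : ℕ => ∫ a in (0 : ℝ)..1,
      2 * Real.cos (2 * π * a * (n + 1)) * Real.exp (-π * (n + 1) ^ 2 * τ))
      (∫ a in (0 : ℝ)..1, (theta τ a - 1)) := by
    refine intervalIntegral.hasSum_integral_of_dominated_convergence
      (fun n _ => 2 * Real.exp (-π * ((n : ℝ) + 1) ^ 2 * τ)) ?_ ?_ ?_ ?_ ?_
    · intro n
      exact Continuous.aestronglyMeasurable (by fun_prop)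
    · intro n
      refine Eventually.of_forall fun a _ => ?_
      rw [norm_mul, norm_mul, Real.norm_eq_abs, Real.norm_eq_abs, Real.norm_eq_abs,
        Real.abs_exp, abs_two]
      gcongr
      nlinarith [Real.abs_cos_le_one (2 * π * a * (n + 1))]
    · exact Eventually.of_forall fun _ _ => (summable_exp_neg_sq hτ).mul_left 2
    · exact intervalIntegrable_const
    · exact Eventually.of_forall fun a _ => theta_hasSum hτ a
  have h0 : ∀ n : ℕ, ∫ a in (0 : ℝ)..1,
      2 * Real.cos (2 * π * a * (n + 1)) * Real.exp (-π * (n + 1) ^ 2 * τ) = 0 := by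
    intro n
    have hc : (2 * π * ((n : ℝ) + 1)) ≠ 0 := by positivity
    have hcos : ∫ a in (0 : ℝ)..1, Real.cos (a * (2 * π * ((n : ℝ) + 1))) = 0 := by
      rw [intervalIntegral.integral_comp_mul_right (fun u => Real.cos u) hc, integral_cos]
      have : Real.sin (1 * (2 * π * ((n : ℝ) + 1))) = 0 := by
        have := Real.sin_nat_mul_pi (2 * (n + 1))
        rw [← this]; push_cast; ring_nf
      rw [this]; simp
    rw [intervalIntegral.integral_mul_const, intervalIntegral.integral_const_mul]
    have : (fun a : ℝ => Real.cos (2 * π * a * ((n : ℝ) + 1)))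
        = fun a => Real.cos (a * (2 * π * ((n : ℝ) + 1))) := by
      funext a; ring_nf
    rw [this, hcos]; simp
  simp_rw [h0] at h
  have h1 := h.unique hasSum_zero
  rw [intervalIntegral.integral_sub ((theta_continuous hτ).intervalIntegrable _ _)
    intervalIntegrable_const] at h1
  simp at h1
  linarith

/-- The image-sum side of the theta functional equation. -/
lemma theta_eq_evenKernel {τ : ℝ} (hτ : 0 < τ) (a : ℝ) :
    theta τ a = (1 / √τ) * HurwitzZeta.evenKernel (a : UnitAddCircle) (1 / τ) := by
  have h := HurwitzZeta.evenKernel_functional_equation (a : UnitAddCircle) (1 / τ)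
  rw [one_div_one_div, ← Real.sqrt_eq_rpow] at h
  rw [h, theta, Real.sqrt_div zero_le_one, Real.sqrt_one]
  have : √τ ≠ 0 := (Real.sqrt_pos.2 hτ).ne'
  field_simp

lemma evenKernel_nonneg' (a : ℝ) {u : ℝ} (hu : 0 < u) :
    0 ≤ HurwitzZeta.evenKernel (a : UnitAddCircle) u :=
  (HurwitzZeta.hasSum_int_evenKernel a hu).nonneg fun _ => (Real.exp_pos _).le

lemma evenKernel_antitone' (a : ℝ) {u v : ℝ} (hu : 0 < u) (huv : u ≤ v) :
    HurwitzZeta.evenKernel (a : UnitAddCircle) v ≤ HurwitzZeta.evenKernel (a : UnitAddCircle) u := by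
  refine hasSum_le (fun n => ?_) (HurwitzZeta.hasSum_int_evenKernel a (hu.trans_le huv))
    (HurwitzZeta.hasSum_int_evenKernel a hu)
  apply Real.exp_le_exp.2
  have : 0 ≤ π * ((n : ℝ) + a) ^ 2 := by positivity
  nlinarith

lemma theta_nonneg {τ : ℝ} (hτ : 0 < τ) (a : ℝ) : 0 ≤ theta τ a := by
  rw [theta_eq_evenKernel hτ]
  exact mul_nonneg (by positivity) (evenKernel_nonneg' a (by positivity))

/-- The periodic Gaussian cannot decrease in time faster than its normalising factor `τ^(-1/2)`. -/
lemma theta_ge {τ τ' : ℝ} (hτ : 0 < τ) (h : τ ≤ τ') (a : ℝ) :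
    (√τ / √τ') * theta τ a ≤ theta τ' a := by
  have hτ' : 0 < τ' := hτ.trans_le h
  rw [theta_eq_evenKernel hτ, theta_eq_evenKernel hτ']
  have h1 : √τ ≠ 0 := (Real.sqrt_pos.2 hτ).ne'
  have h2 : 0 < √τ' := Real.sqrt_pos.2 hτ'
  have : √τ / √τ' * (1 / √τ * HurwitzZeta.evenKernel (a : UnitAddCircle) (1 / τ))
      = 1 / √τ' * HurwitzZeta.evenKernel (a : UnitAddCircle) (1 / τ) := by
    field_simp
  rw [this]
  have := evenKernel_antitone' a (one_div_pos.2 hτ') (one_div_le_one_div_of_le hτ h)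
  gcongr

/-- The `L¹` time increment of the periodic Gaussian: a one-sided comparison between functions of
equal mass controls their `L¹` distance. -/
lemma integral_abs_theta_sub_le {τ τ' : ℝ} (hτ : 0 < τ) (h : τ ≤ τ') :
    ∫ a in (0 : ℝ)..1, |theta τ' a - theta τ a| ≤ 2 * (1 - τ / τ') := by
  have hτ' : 0 < τ' := hτ.trans_le h
  set c := √τ / √τ' with hc
  have hs' : 0 < √τ' := Real.sqrt_pos.2 hτ'
  have hc0 : 0 ≤ c := by positivity
  have hc1 : c ≤ 1 := by
    rw [hc, div_le_one hs']; exact Real.sqrt_le_sqrt h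
  have hcc : c ^ 2 = τ / τ' := by
    rw [hc, div_pow, Real.sq_sqrt hτ.le, Real.sq_sqrt hτ'.le]
  have hk' := theta_continuous hτ'
  have hk := theta_continuous hτ
  -- split `Θ_τ' - Θ_τ = (Θ_τ' - c Θ_τ) - (1 - c) Θ_τ`, a difference of nonnegative functions
  have hle : ∀ a, |theta τ' a - theta τ a| ≤ theta τ' a + (1 - 2 * c) * theta τ a := by
    intro a
    have h1 := theta_ge hτ h a
    have h2 := theta_nonneg hτ a
    rw [abs_le]
    constructor <;> nlinarith [mul_nonneg (sub_nonneg.2 hc1) h2]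
  have hki : IntervalIntegrable (fun a => (1 - 2 * c) * theta τ a) volume 0 1 :=
    (hk.intervalIntegrable _ _).const_mul _
  calc ∫ a in (0 : ℝ)..1, |theta τ' a - theta τ a|
      ≤ ∫ a in (0 : ℝ)..1, (theta τ' a + (1 - 2 * c) * theta τ a) := by
        apply intervalIntegral.integral_mono_on zero_le_one
        · exact (hk'.sub hk).abs.intervalIntegrable _ _
        · exact (hk'.add (continuous_const.mul hk)).intervalIntegrable _ _
        · exact fun a _ => hle a
    _ = 2 * (1 - c) := by
        rw [intervalIntegral.integral_add (hk'.intervalIntegrable _ _) hki,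
          intervalIntegral.integral_const_mul,
          integral_theta hτ, integral_theta hτ']
        ring
    _ ≤ 2 * (1 - τ / τ') := by rw [← hcc]; nlinarith

/-! ### The Dirichlet kernel -/

lemma G_eq_theta {t : ℝ} (ht : 0 < t) (x y : ℝ) :
    G t x y = (theta (π * t / 2) ((x - y) / 2) - theta (π * t / 2) ((x + y) / 2)) / 2 := by
  have hτ : 0 < π * t / 2 := by positivity
  have h := ((theta_hasSum hτ ((x - y) / 2)).sub (theta_hasSum hτ ((x + y) / 2))).div_const 4
  have hterm : ∀ n : ℕ,
      (2 * Real.cos (2 * π * ((x - y) / 2) * (n + 1)) * Real.exp (-π * (n + 1) ^ 2 * (π * t / 2)) -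
        2 * Real.cos (2 * π * ((x + y) / 2) * (n + 1)) *
          Real.exp (-π * (n + 1) ^ 2 * (π * t / 2))) / 4
      = Real.sin (((n : ℝ) + 1) * Real.pi * x) * Real.sin (((n : ℝ) + 1) * Real.pi * y) *
      Real.exp (-(((n : ℝ) + 1) ^ 2) * Real.pi ^ 2 * t / 2) := by
    intro n
    have e1 : 2 * π * ((x - y) / 2) * ((n : ℝ) + 1)
        = ((n : ℝ) + 1) * π * x - ((n : ℝ) + 1) * π * y := by ring
    have e2 : 2 * π * ((x + y) / 2) * ((n : ℝ) + 1)
        = ((n : ℝ) + 1) * π * x + ((n : ℝ) + 1) * π * y := by ring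
    have e3 : -π * ((n : ℝ) + 1) ^ 2 * (π * t / 2)
        = -(((n : ℝ) + 1) ^ 2) * Real.pi ^ 2 * t / 2 := by ring
    rw [e1, e2, e3, Real.cos_sub, Real.cos_add]
    ring
  simp_rw [hterm] at h
  rw [G, h.tsum_eq]
  ring

/-- The temporal continuity estimate for the Dirichlet kernel, in the form `2 ε / (u + ε)`. -/
lemma integral_abs_G_sub_le {u ε : ℝ} (hu : 0 < u) (hε : 0 < ε) (x : ℝ) :
    ∫ y in (0 : ℝ)..1, |G (u + ε) x y - G u x y| ≤ 2 * (ε / (u + ε)) := by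
  have hτ : 0 < π * u / 2 := by positivity
  have hτ' : 0 < π * (u + ε) / 2 := by positivity
  have hττ' : π * u / 2 ≤ π * (u + ε) / 2 := by
    have := Real.pi_pos
    gcongr
    linarith
  set D : ℝ → ℝ := fun a => |theta (π * (u + ε) / 2) a - theta (π * u / 2) a| with hD
  have hDc : Continuous D := ((theta_continuous hτ').sub (theta_continuous hτ)).abs
  have hDp : Function.Periodic D 1 := by
    intro a
    simp only [hD, theta_periodic _ a]
  have hle : ∀ y, |G (u + ε) x y - G u x y| ≤ (D ((x - y) / 2) + D ((x + y) / 2)) / 2 := by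
    intro y
    rw [G_eq_theta (by linarith), G_eq_theta hu]
    simp only [hD]
    generalize theta (π * (u + ε) / 2) ((x - y) / 2) = p
    generalize theta (π * (u + ε) / 2) ((x + y) / 2) = q
    generalize theta (π * u / 2) ((x - y) / 2) = r
    generalize theta (π * u / 2) ((x + y) / 2) = s
    have h := abs_sub (p - r) (q - s)
    have : (p - q) / 2 - (r - s) / 2 = ((p - r) - (q - s)) / 2 := by ring
    rw [this, abs_div, abs_two]
    gcongr
  have i1 : Continuous fun y => D ((x - y) / 2) := hDc.comp (by fun_prop)
  have i2 : Continuous fun y => D ((x + y) / 2) := hDc.comp (by fun_prop)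
  have hGc : Continuous fun y => |G (u + ε) x y - G u x y| := by
    have e : ∀ {t : ℝ}, 0 < t → Continuous fun y => G t x y := by
      intro t ht
      have hh : 0 < π * t / 2 := by positivity
      have := theta_continuous hh
      simp_rw [G_eq_theta ht]
      fun_prop
    exact ((e (by linarith)).sub (e hu)).abs
  have s1 : ∫ y in (0 : ℝ)..1, D ((x - y) / 2) = 2 * ∫ a in ((x - 1) / 2)..(x / 2), D a := by
    have := intervalIntegral.integral_comp_sub_mul (a := 0) (b := 1) D
      (c := 1 / 2) (by norm_num) (x / 2)
    have e : (fun y => D ((x - y) / 2)) = fun y => D (x / 2 - 1 / 2 * y) := by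
      funext y; ring_nf
    rw [e, this, smul_eq_mul]
    ring_nf
  have s2 : ∫ y in (0 : ℝ)..1, D ((x + y) / 2) = 2 * ∫ a in (x / 2)..((x + 1) / 2), D a := by
    have := intervalIntegral.integral_comp_add_mul (a := 0) (b := 1) D
      (c := 1 / 2) (by norm_num) (x / 2)
    have e : (fun y => D ((x + y) / 2)) = fun y => D (x / 2 + 1 / 2 * y) := by
      funext y; ring_nf
    rw [e, this, smul_eq_mul]
    ring_nf
  calc ∫ y in (0 : ℝ)..1, |G (u + ε) x y - G u x y|
      ≤ ∫ y in (0 : ℝ)..1, (D ((x - y) / 2) + D ((x + y) / 2)) / 2 := by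
        apply intervalIntegral.integral_mono_on zero_le_one (hGc.intervalIntegrable _ _)
        · exact ((i1.add i2).div_const 2).intervalIntegrable _ _
        · exact fun y _ => hle y
    _ = ∫ a in ((x - 1) / 2)..((x + 1) / 2), D a := by
        rw [intervalIntegral.integral_div,
          intervalIntegral.integral_add (i1.intervalIntegrable _ _) (i2.intervalIntegrable _ _),
          s1, s2, ← mul_add, intervalIntegral.integral_add_adjacent_intervals
            (hDc.intervalIntegrable _ _) (hDc.intervalIntegrable _ _)]
        ring
    _ = ∫ a in (0 : ℝ)..1, D a := by
        have := hDp.intervalIntegral_add_eq ((x - 1) / 2) 0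
        rw [zero_add] at this
        rw [← this]
        congr 1
        ring
    _ ≤ 2 * (1 - (π * u / 2) / (π * (u + ε) / 2)) := integral_abs_theta_sub_le hτ hττ'
    _ = 2 * (ε / (u + ε)) := by
        have h1 : u + ε ≠ 0 := by positivity
        have := Real.pi_ne_zero
        field_simp
        ring

/-! ### The weighted time integral -/

lemma ratio_le_rpow {u ε δ : ℝ} (hu : 0 < u) (hε : 0 < ε) (hδ : 0 < δ) (hδ1 : δ ≤ 1) :
    ε / (u + ε) ≤ ε ^ δ * u ^ (-δ) := by
  have h0 : 0 < ε / (u + ε) := by positivity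
  have h1 : ε / (u + ε) ≤ 1 := by rw [div_le_one (by positivity)]; linarith
  calc ε / (u + ε) = (ε / (u + ε)) ^ (1 : ℝ) := (Real.rpow_one _).symm
    _ ≤ (ε / (u + ε)) ^ δ := Real.rpow_le_rpow_of_exponent_ge h0 h1 hδ1
    _ ≤ (ε / u) ^ δ := by
        apply Real.rpow_le_rpow h0.le _ hδ.le
        gcongr
        linarith
    _ = ε ^ δ * u ^ (-δ) := by
        rw [Real.div_rpow hε.le hu.le, Real.rpow_neg hu.le, div_eq_mul_inv]

lemma exp_neg_le_rpow {z a : ℝ} (hz : 0 < z) (ha : 0 < a) (ha1 : a ≤ 1) :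
    Real.exp (-z) ≤ z ^ (-a) := by
  rw [Real.exp_neg, Real.rpow_neg hz.le]
  apply inv_anti₀ (Real.rpow_pos_of_pos hz a)
  have h2 := Real.add_one_le_exp z
  rcases le_total z 1 with h | h
  · have := Real.rpow_le_one hz.le h ha.le
    linarith
  · have := Real.rpow_le_rpow_of_exponent_le h ha1
    rw [Real.rpow_one] at this
    linarith

/-- One of `s` and `t - s` is at least `t / 2`, which separates the singularities at the two
endpoints. -/
lemma singular_product_le {s t θ b : ℝ} (hs : 0 < s) (hst : s < t) (hθ : 0 < θ) (hb : 0 < b) :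
    s ^ (-θ) * (t - s) ^ (-b) ≤
      (t / 2) ^ (-b) * s ^ (-θ) + (t / 2) ^ (-θ) * (t - s) ^ (-b) := by
  have hu : 0 < t - s := by linarith
  have ht : 0 < t / 2 := by linarith
  have p1 : 0 < s ^ (-θ) := Real.rpow_pos_of_pos hs _
  have p2 : 0 < (t - s) ^ (-b) := Real.rpow_pos_of_pos hu _
  have p3 : 0 < (t / 2) ^ (-b) := Real.rpow_pos_of_pos ht _
  have p4 : 0 < (t / 2) ^ (-θ) := Real.rpow_pos_of_pos ht _
  rcases le_total s (t / 2) with h | h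
  · have : (t - s) ^ (-b) ≤ (t / 2) ^ (-b) :=
      Real.rpow_le_rpow_of_nonpos ht (by linarith) (by linarith)
    nlinarith [mul_pos p4 p2]
  · have : s ^ (-θ) ≤ (t / 2) ^ (-θ) :=
      Real.rpow_le_rpow_of_nonpos ht h (by linarith)
    nlinarith [mul_pos p3 p1]

lemma integral_rpow_neg {t θ : ℝ} (hθ1 : θ < 1) :
    ∫ s in (0 : ℝ)..t, s ^ (-θ) = t ^ (1 - θ) / (1 - θ) := by
  rw [integral_rpow (Or.inl (by linarith)), Real.zero_rpow (by linarith)]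
  ring_nf

lemma integral_sub_rpow_neg {t b : ℝ} (hb1 : b < 1) :
    ∫ s in (0 : ℝ)..t, (t - s) ^ (-b) = t ^ (1 - b) / (1 - b) := by
  rw [intervalIntegral.integral_comp_sub_left (fun u => u ^ (-b)) t, sub_self, sub_zero,
    integral_rpow_neg hb1]

lemma intervalIntegrable_sub_rpow_neg {t b : ℝ} (hb1 : b < 1) :
    IntervalIntegrable (fun s => (t - s) ^ (-b)) volume 0 t := by
  have h : IntervalIntegrable (fun u : ℝ => u ^ (-b)) volume t 0 :=
    intervalIntegral.intervalIntegrable_rpow' (by linarith)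
  simpa using h.comp_sub_left t

theorem weighted_kernel_time_increment
    (δ η θ : ℝ) (hδ : δ ∈ Set.Ioo (0 : ℝ) 1) (hη : η ∈ Set.Ioo δ 1)
    (hθ : θ ∈ Set.Ioo (0 : ℝ) 1) :
    ∃ C : ℝ, 0 < C ∧ ∀ t β ε x : ℝ, t ∈ Set.Ioc (0 : ℝ) 1 → 0 < β →
      ε ∈ Set.Ioo (0 : ℝ) 1 → x ∈ Set.Icc (0 : ℝ) 1 →
      t ^ θ * Real.exp (-β * t) *
        (∫ s in (0 : ℝ)..t, s ^ (-θ) * Real.exp (β * s) *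
          (∫ y in (0 : ℝ)..1, |G (t + ε - s) x y - G (t - s) x y|))
        ≤ C * ε ^ δ / β ^ (1 - η) := by
  obtain ⟨hδ0, hδ1⟩ := hδ
  obtain ⟨hη0, hη1⟩ := hη
  obtain ⟨hθ0, hθ1⟩ := hθ
  have h1θ : 0 < 1 - θ := by linarith
  have hηδ : 0 < η - δ := by linarith
  refine ⟨2 * (2 / (1 - θ) + 2 / (η - δ)), by positivity, ?_⟩
  rintro t β ε x ⟨ht0, ht1⟩ hβ ⟨hε0, hε1⟩ -
  set b : ℝ := 1 - η + δ with hb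
  have hb0 : 0 < b := by linarith
  have hb1 : b < 1 := by linarith
  have ht2 : 0 < t / 2 := by positivity
  set A : ℝ := 2 * ε ^ δ * β ^ (-(1 - η)) * Real.exp (β * t) with hA
  have hA0 : 0 < A := by positivity
  set B : ℝ → ℝ := fun s =>
    A * ((t / 2) ^ (-b) * s ^ (-θ) + (t / 2) ^ (-θ) * (t - s) ^ (-b)) with hB
  have j1 : IntervalIntegrable (fun s : ℝ => (t / 2) ^ (-b) * s ^ (-θ)) volume 0 t :=
    (intervalIntegral.intervalIntegrable_rpow' (by linarith)).const_mul _
  have j2 : IntervalIntegrable (fun s : ℝ => (t / 2) ^ (-θ) * (t - s) ^ (-b)) volume 0 t :=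
    (intervalIntegrable_sub_rpow_neg hb1).const_mul _
  have hBint : IntervalIntegrable B volume 0 t := (j1.add j2).const_mul A
  have hpt : ∀ s ∈ Set.Ioo (0 : ℝ) t, s ^ (-θ) * Real.exp (β * s) *
      (∫ y in (0 : ℝ)..1, |G (t + ε - s) x y - G (t - s) x y|) ≤ B s := by
    rintro s ⟨hs0, hst⟩
    have hu : 0 < t - s := by linarith
    have hG : (∫ y in (0 : ℝ)..1, |G (t + ε - s) x y - G (t - s) x y|)
        ≤ 2 * (ε ^ δ * (t - s) ^ (-δ)) := by
      have h := integral_abs_G_sub_le hu hε0 x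
      rw [show t - s + ε = t + ε - s by ring] at h
      have h2 := ratio_le_rpow hu hε0 hδ0 hδ1.le
      rw [show t - s + ε = t + ε - s by ring] at h2
      linarith
    have hy : 0 ≤ ∫ y in (0 : ℝ)..1, |G (t + ε - s) x y - G (t - s) x y| :=
      intervalIntegral.integral_nonneg zero_le_one fun _ _ => abs_nonneg _
    have hE : Real.exp (β * s) ≤
        Real.exp (β * t) * (β ^ (-(1 - η)) * (t - s) ^ (-(1 - η))) := by
      have h := exp_neg_le_rpow (z := β * (t - s)) (a := 1 - η) (by positivity) (by linarith)
        (by linarith)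
      rw [Real.mul_rpow hβ.le hu.le] at h
      calc Real.exp (β * s) = Real.exp (β * t) * Real.exp (-(β * (t - s))) := by
            rw [← Real.exp_add]; ring_nf
        _ ≤ _ := by gcongr
    have hbsplit : (t - s) ^ (-b) = (t - s) ^ (-(1 - η)) * (t - s) ^ (-δ) := by
      rw [← Real.rpow_add hu]; congr 1; rw [hb]; ring
    calc _ ≤ s ^ (-θ) * (Real.exp (β * t) * (β ^ (-(1 - η)) * (t - s) ^ (-(1 - η)))) *
          (2 * (ε ^ δ * (t - s) ^ (-δ))) := by gcongr
      _ = A * (s ^ (-θ) * (t - s) ^ (-b)) := by rw [hbsplit, hA]; ring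
      _ ≤ B s := by
          exact mul_le_mul_of_nonneg_left (singular_product_le hs0 hst hθ0 hb0) hA0.le
  -- only the dominating function has to be integrable, as the integrand is nonnegative
  have hint : (∫ s in (0 : ℝ)..t, s ^ (-θ) * Real.exp (β * s) *
      (∫ y in (0 : ℝ)..1, |G (t + ε - s) x y - G (t - s) x y|)) ≤ ∫ s in (0 : ℝ)..t, B s := by
    rw [intervalIntegral.integral_of_le ht0.le, intervalIntegral.integral_of_le ht0.le,
      integral_Ioc_eq_integral_Ioo, integral_Ioc_eq_integral_Ioo]
    apply integral_mono_of_nonneg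
    · refine (ae_restrict_iff' measurableSet_Ioo).2 (Eventually.of_forall fun s hs => ?_)
      have hy : 0 ≤ ∫ y in (0 : ℝ)..1, |G (t + ε - s) x y - G (t - s) x y| :=
        intervalIntegral.integral_nonneg zero_le_one fun _ _ => abs_nonneg _
      have := Real.rpow_nonneg hs.1.le (-θ)
      exact mul_nonneg (mul_nonneg this (Real.exp_pos _).le) hy
    · exact ((intervalIntegrable_iff_integrableOn_Ioc_of_le ht0.le).1 hBint).mono_set
        Ioo_subset_Ioc_self
    · exact (ae_restrict_iff' measurableSet_Ioo).2 (Eventually.of_forall hpt)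
  have hBval : ∫ s in (0 : ℝ)..t, B s = A * ((t / 2) ^ (-b) * (t ^ (1 - θ) / (1 - θ)) +
      (t / 2) ^ (-θ) * (t ^ (1 - b) / (1 - b))) := by
    rw [hB, intervalIntegral.integral_const_mul, intervalIntegral.integral_add j1 j2,
      intervalIntegral.integral_const_mul, intervalIntegral.integral_const_mul,
      integral_rpow_neg hθ1, integral_sub_rpow_neg hb1]
  -- scaling: both terms are multiples of `t ^ (1 - b)`, which is at most one
  have hhalf : ∀ r : ℝ, r < 1 → (t / 2) ^ (-r) ≤ 2 * t ^ (-r) := by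
    intro r hr
    rw [Real.div_rpow ht0.le zero_le_two, Real.rpow_neg zero_le_two, div_inv_eq_mul, mul_comm]
    have : (2 : ℝ) ^ r ≤ 2 ^ (1 : ℝ) := Real.rpow_le_rpow_of_exponent_le one_le_two hr.le
    rw [Real.rpow_one] at this
    gcongr
  have htb : t ^ (1 - b) ≤ 1 := Real.rpow_le_one ht0.le ht1 (by linarith)
  have e1 : t ^ θ * (t ^ (-b) * t ^ (1 - θ)) = t ^ (1 - b) := by
    rw [← Real.rpow_add ht0, ← Real.rpow_add ht0]; ring_nf
  have e2 : t ^ θ * (t ^ (-θ) * t ^ (1 - b)) = t ^ (1 - b) := by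
    rw [← Real.rpow_add ht0, ← Real.rpow_add ht0]; ring_nf
  have hscale : t ^ θ * ((t / 2) ^ (-b) * (t ^ (1 - θ) / (1 - θ)) +
      (t / 2) ^ (-θ) * (t ^ (1 - b) / (1 - b))) ≤ 2 / (1 - θ) + 2 / (η - δ) := by
    have h1b : 1 - b = η - δ := by rw [hb]; ring
    have h1b0 : 0 < 1 - b := by linarith
    calc _ ≤ t ^ θ * ((2 * t ^ (-b)) * (t ^ (1 - θ) / (1 - θ)) +
          (2 * t ^ (-θ)) * (t ^ (1 - b) / (1 - b))) := by
          gcongr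
          · exact hhalf b hb1
          · exact hhalf θ hθ1
      _ = 2 * (t ^ θ * (t ^ (-b) * t ^ (1 - θ))) / (1 - θ) +
          2 * (t ^ θ * (t ^ (-θ) * t ^ (1 - b))) / (1 - b) := by ring
      _ = 2 * t ^ (1 - b) / (1 - θ) + 2 * t ^ (1 - b) / (1 - b) := by rw [e1, e2]
      _ ≤ 2 * 1 / (1 - θ) + 2 * 1 / (1 - b) := by gcongr
      _ = 2 / (1 - θ) + 2 / (η - δ) := by rw [h1b]; ring
  have hexp : Real.exp (-β * t) * Real.exp (β * t) = 1 := by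
    rw [← Real.exp_add]; simp
  calc _ ≤ t ^ θ * Real.exp (-β * t) * ∫ s in (0 : ℝ)..t, B s := by gcongr
    _ = (Real.exp (-β * t) * Real.exp (β * t)) * (2 * ε ^ δ * β ^ (-(1 - η))) *
        (t ^ θ * ((t / 2) ^ (-b) * (t ^ (1 - θ) / (1 - θ)) +
          (t / 2) ^ (-θ) * (t ^ (1 - b) / (1 - b)))) := by rw [hBval, hA]; ring
    _ ≤ 1 * (2 * ε ^ δ * β ^ (-(1 - η))) * (2 / (1 - θ) + 2 / (η - δ)) := by
        rw [hexp]; gcongr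
    _ = 2 * (2 / (1 - θ) + 2 / (η - δ)) * ε ^ δ / β ^ (1 - η) := by
        rw [Real.rpow_neg hβ.le]; ring

end
end
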